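/- arXiv:1309.7664 — 6 statements merged into one kernel-verified Lean document; each statement's English description precedes it below -/
import Mathlib

section
/- Suppose γ₀ ∈ ℂ^K has support of size M, that Mε < 1/2, and let b = Gγ₀. Then γ₀ is the unique minimizer of the ℓ1 norm subject to the data constraint: for every γ ∈ ℂ^K with Gγ = b and γ ≠ γ₀ one has ‖γ₀‖_{ℓ1} < ‖γ‖_{ℓ1}. -/
/-!
Write `h = γ - γ₀`, a nonzero kernel vector of `G`. Pairing `G h = 0` with the unit column `g_i`
expresses `h_i` through the other entries, with coefficients smaller than `ε`; hence
`|h_i| ≤ ε ‖h‖₁` (`norm_kernel_entry_le`). Summing over the support `S` of `γ₀` gives the null space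
property `‖h_S‖₁ ≤ M ε ‖h‖₁ < ‖h‖₁ / 2`, so `h` has more mass off `S` than on it. Passing from `γ₀`
to `γ₀ + h` therefore gains `‖h_{Sᶜ}‖₁` off `S` and loses at most `‖h_S‖₁` on `S`.
-/

open Finset

/-- The vector ℓ1 norm on ℂ^n. -/
noncomputable def l1norm {n : ℕ} (v : Fin n → ℂ) : ℝ := ∑ i, ‖v i‖

/-- The vector ℓ2 norm on ℂ^n. -/
noncomputable def l2norm {n : ℕ} (v : Fin n → ℂ) : ℝ := Real.sqrt (∑ i, ‖v i‖ ^ 2)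

/-- No entry of a kernel vector carries more than the fraction `ε` of its ℓ1 mass. -/
lemma norm_kernel_entry_le {N K : ℕ} {ε : ℝ} (hε : 0 < ε) (G : Matrix (Fin N) (Fin K) ℂ)
    (hcols : ∀ j : Fin K, l2norm (fun i => G i j) = 1)
    (hcoh : ∀ i j : Fin K, i ≠ j → ‖∑ n, (starRingEnd ℂ) (G n i) * G n j‖ < ε)
    (h : Fin K → ℂ) (hker : G.mulVec h = 0) (i : Fin K) :
    ‖h i‖ ≤ ε * l1norm h := by
  have hdiag : ∑ n, (starRingEnd ℂ) (G n i) * G n i = 1 := by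
    have h1 := hcols i
    rw [l2norm, Real.sqrt_eq_one] at h1
    have h2 : ∀ n, (starRingEnd ℂ) (G n i) * G n i = ((‖G n i‖ ^ 2 : ℝ) : ℂ) := fun n => by
      rw [Complex.conj_mul']
      push_cast
      rfl
    simp_rw [h2]
    rw [← Complex.ofReal_sum, h1, Complex.ofReal_one]
  have hpair : ∑ j, (∑ n, (starRingEnd ℂ) (G n i) * G n j) * h j = 0 := by
    simp_rw [Finset.sum_mul]
    rw [Finset.sum_comm]
    refine Finset.sum_eq_zero fun n _ => ?_
    have hn : ∑ j, G n j * h j = 0 := congrFun hker n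
    simp_rw [mul_assoc]
    rw [← Finset.mul_sum, hn, mul_zero]
  rw [← Finset.add_sum_erase _ _ (Finset.mem_univ i), hdiag, one_mul] at hpair
  rw [eq_neg_of_add_eq_zero_left hpair, norm_neg, l1norm, Finset.mul_sum]
  calc _ ≤ ∑ j ∈ Finset.univ.erase i, ε * ‖h j‖ := by
        refine norm_sum_le_of_le _ fun j hj => ?_
        rw [norm_mul]
        exact mul_le_mul_of_nonneg_right
          (hcoh i j (Finset.ne_of_mem_erase hj).symm).le (norm_nonneg _)
    _ ≤ ∑ j, ε * ‖h j‖ :=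
        Finset.sum_le_sum_of_subset_of_nonneg (Finset.erase_subset _ _)
          fun j _ _ => by positivity

/-- If `γ₀ ∈ ℂ^K` has support of size `M`, `Mε < 1/2`, and `b = Gγ₀`,
then `γ₀` is the unique minimizer of the ℓ1 norm subject to `Gγ = b`:
any other feasible `γ ≠ γ₀` has strictly larger ℓ1 norm. -/
theorem smv_noiseless_exact_recovery
    (N K : ℕ) (hN : 0 < N) (hK : 0 < K) (ε : ℝ) (hε : 0 < ε)
    (G : Matrix (Fin N) (Fin K) ℂ)
    (hcols : ∀ j : Fin K, l2norm (fun i => G i j) = 1)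
    (hcoh : ∀ i j : Fin K, i ≠ j →
      ‖∑ n, (starRingEnd ℂ) (G n i) * G n j‖ < ε)
    (M : ℕ) (γ₀ : Fin K → ℂ)
    (hsupp : {j | γ₀ j ≠ 0}.ncard = M)
    (hMε : (M : ℝ) * ε < 1 / 2)
    (b : Fin N → ℂ) (hb : b = G.mulVec γ₀) :
    ∀ γ : Fin K → ℂ, G.mulVec γ = b → γ ≠ γ₀ → l1norm γ₀ < l1norm γ := by
  intro γ hγ hne
  classical
  set h : Fin K → ℂ := γ - γ₀ with hh
  have hker : G.mulVec h = 0 := by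
    rw [hh, Matrix.mulVec_sub, hγ, hb, sub_self]
  have hpos : 0 < l1norm h := by
    obtain ⟨j, hj⟩ := Function.ne_iff.mp (sub_ne_zero.mpr hne)
    exact Finset.sum_pos' (fun _ _ => norm_nonneg _) ⟨j, Finset.mem_univ j, norm_pos_iff.mpr hj⟩
  set S : Finset (Fin K) := Finset.univ.filter (fun j => γ₀ j ≠ 0) with hS
  have hcard : S.card = M := by
    rw [← hsupp, ← Set.ncard_coe_finset]
    simp [hS]
  have hnsp : ∑ j ∈ S, ‖h j‖ ≤ M * ε * l1norm h := by
    calc ∑ j ∈ S, ‖h j‖ ≤ ∑ _j ∈ S, ε * l1norm h :=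
          Finset.sum_le_sum fun j _ => norm_kernel_entry_le hε G hcols hcoh h hker j
      _ = M * ε * l1norm h := by
          rw [Finset.sum_const, hcard, nsmul_eq_mul, mul_assoc]
  have hhalf : M * ε * l1norm h < 1 / 2 * l1norm h := mul_lt_mul_of_pos_right hMε hpos
  have hsplit : ∀ f : Fin K → ℝ, ∑ j, f j = ∑ j ∈ S, f j + ∑ j ∈ Sᶜ, f j :=
    fun f => (Finset.sum_add_sum_compl S f).symm
  have hoff : ∀ j ∈ Sᶜ, γ₀ j = 0 := fun j hj => by simpa [hS] using hj
  have h0 : ∑ j ∈ Sᶜ, ‖γ₀ j‖ = 0 :=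
    Finset.sum_eq_zero fun j hj => by rw [hoff j hj, norm_zero]
  have h1 : ∑ j ∈ Sᶜ, ‖γ j‖ = ∑ j ∈ Sᶜ, ‖h j‖ :=
    Finset.sum_congr rfl fun j hj => by rw [hh, Pi.sub_apply, hoff j hj, sub_zero]
  have h2 : ∑ j ∈ S, ‖γ₀ j‖ ≤ ∑ j ∈ S, ‖γ j‖ + ∑ j ∈ S, ‖h j‖ := by
    rw [← Finset.sum_add_distrib]
    exact Finset.sum_le_sum fun j _ => norm_le_norm_add_norm_sub (γ j) (γ₀ j)
  have h3 : l1norm h = ∑ j ∈ S, ‖h j‖ + ∑ j ∈ Sᶜ, ‖h j‖ := hsplit _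
  rw [l1norm, l1norm, hsplit, hsplit (fun j => ‖γ j‖), h0, h1]
  linarith
end

section
/- Suppose X₀ ∈ ℂ^{K×ν} has row-support of size M, that Mε < 1/2, and let B = G X₀. Then X₀ is the unique minimizer of J_{2,1} subject to the data constraint: for every X ∈ ℂ^{K×ν} with GX = B and X ≠ X₀ one has J_{2,1}(X₀) < J_{2,1}(X). -/
/-!
Let `H = X - X₀`, so `G H = 0`, and let `R = J21 H > 0`. Since the columns of `G` are unit vectors,
multiplying `G H = 0` by the adjoint of `G` expresses row `i` of `H` as
`-∑ j ≠ i, ⟨g_i, g_j⟩ H_j`, so each row of `H` has norm at most `ε R` (`row_norm_le`). Hence the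
rows of `H` indexed by the row support of `X₀` have total norm at most `M ε R < R / 2`: this is the
null space property. The triangle inequality then gives
`J21 X ≥ J21 X₀ + R - 2 * (total norm of H on the support) > J21 X₀`.
-/

open Finset

/-- The `J_{2,1}` norm of a matrix: sum of the ℓ2 norms of its rows. -/
noncomputable def J21 {K ν : ℕ} (X : Matrix (Fin K) (Fin ν) ℂ) : ℝ :=
  ∑ i, Real.sqrt (∑ t, ‖X i t‖ ^ 2)

/-- Row `i` of `X` as a vector of the Euclidean space `ℂ^ν`. -/
noncomputable def euclRow {K ν : ℕ} (X : Matrix (Fin K) (Fin ν) ℂ) (i : Fin K) :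
    EuclideanSpace ℂ (Fin ν) := WithLp.toLp 2 (X i)

lemma J21_eq_sum_norm {K ν : ℕ} (X : Matrix (Fin K) (Fin ν) ℂ) :
    J21 X = ∑ i, ‖euclRow X i‖ := by
  simp [J21, euclRow, EuclideanSpace.norm_eq]

lemma sum_conj_mul_self_eq_one {n : ℕ} (v : Fin n → ℂ) (hv : l2norm v = 1) :
    ∑ i, (starRingEnd ℂ) (v i) * v i = 1 := by
  have h : ∑ i, ‖v i‖ ^ 2 = 1 := by
    simpa [l2norm, Real.sqrt_eq_one] using hv
  simp_rw [Complex.conj_mul']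
  exact_mod_cast h

/-- Incoherence spreads out null vectors: no row of a matrix in the kernel of `G` carries more than
a fraction `ε` of its total row norm. -/
lemma row_norm_le {N K ν : ℕ} {ε : ℝ} (hε : 0 < ε) (G : Matrix (Fin N) (Fin K) ℂ)
    (hcols : ∀ j : Fin K, l2norm (fun i => G i j) = 1)
    (hcoh : ∀ i j : Fin K, i ≠ j → ‖∑ n, (starRingEnd ℂ) (G n i) * G n j‖ < ε)
    (H : Matrix (Fin K) (Fin ν) ℂ) (hH : G * H = 0) (i : Fin K) :
    ‖euclRow H i‖ ≤ ε * J21 H := by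
  have hsum : ∑ j, (∑ n, (starRingEnd ℂ) (G n i) * G n j) • euclRow H j = 0 := by
    ext t
    have h : ∀ n, ∑ j, G n j * H j t = 0 := fun n => by
      simpa [Matrix.mul_apply] using congrFun (congrFun hH n) t
    simp only [WithLp.ofLp_sum, WithLp.ofLp_smul, Finset.sum_apply, Pi.smul_apply, smul_eq_mul,
      euclRow, Finset.sum_mul, WithLp.ofLp_zero, Pi.zero_apply]
    rw [Finset.sum_comm]
    simp_rw [mul_assoc, ← Finset.mul_sum, h, mul_zero, Finset.sum_const_zero]
  rw [← Finset.add_sum_erase _ _ (Finset.mem_univ i),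
    sum_conj_mul_self_eq_one _ (hcols i), one_smul] at hsum
  rw [eq_neg_of_add_eq_zero_left hsum, norm_neg, J21_eq_sum_norm, Finset.mul_sum]
  refine (norm_sum_le _ _).trans ?_
  calc _ ≤ ∑ j ∈ univ.erase i, ε * ‖euclRow H j‖ := by
        refine Finset.sum_le_sum fun j hj => ?_
        rw [norm_smul]
        exact mul_le_mul_of_nonneg_right
          (hcoh i j (Finset.ne_of_mem_erase hj).symm).le (norm_nonneg _)
    _ ≤ _ := Finset.sum_le_sum_of_subset_of_nonneg (Finset.erase_subset _ _)
        fun j _ _ => by positivity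

/-- If `X₀ ∈ ℂ^{K×ν}` has row-support of size `M`, `Mε < 1/2`, and
`B = G X₀`, then `X₀` is the unique minimizer of `J_{2,1}` subject to `GX = B`:
any other feasible `X ≠ X₀` has strictly larger `J_{2,1}` value. -/
theorem mmv_noiseless_exact_recovery_J21
    (N K ν : ℕ) (hN : 0 < N) (hK : 0 < K) (hν : 0 < ν) (ε : ℝ) (hε : 0 < ε)
    (G : Matrix (Fin N) (Fin K) ℂ)
    (hcols : ∀ j : Fin K, l2norm (fun i => G i j) = 1)
    (hcoh : ∀ i j : Fin K, i ≠ j →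
      ‖∑ n, (starRingEnd ℂ) (G n i) * G n j‖ < ε)
    (M : ℕ) (X₀ : Matrix (Fin K) (Fin ν) ℂ)
    (hrowsupp : {i | X₀ i ≠ 0}.ncard = M)
    (hMε : (M : ℝ) * ε < 1 / 2)
    (B : Matrix (Fin N) (Fin ν) ℂ) (hB : B = G * X₀) :
    ∀ X : Matrix (Fin K) (Fin ν) ℂ, G * X = B → X ≠ X₀ → J21 X₀ < J21 X := by
  classical
  intro X hX hne
  set H := X - X₀ with hHdef
  have hGH : G * H = 0 := by rw [hHdef, Matrix.mul_sub, hX, hB, sub_self]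
  have hrow : ∀ i, euclRow X i = euclRow X₀ i + euclRow H i := fun i => by
    ext t; simp [euclRow, hHdef]
  have hpos : 0 < J21 H := by
    rw [J21_eq_sum_norm]
    refine lt_of_le_of_ne (Finset.sum_nonneg fun _ _ => norm_nonneg _) fun h => hne ?_
    have h0 := (Finset.sum_eq_zero_iff_of_nonneg fun _ _ => norm_nonneg _).1 h.symm
    ext i t
    have := congrArg (fun v : EuclideanSpace ℂ (Fin ν) => v t)
      (norm_eq_zero.1 (h0 i (Finset.mem_univ i)))
    simpa [euclRow, hHdef, sub_eq_zero] using this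
  set S : Finset (Fin K) := univ.filter fun i => X₀ i ≠ 0 with hS
  have hcard : S.card = M := by
    rw [← hrowsupp, ← Set.ncard_coe_finset, hS]
    congr 1
    ext i; simp
  have hSsum : ∑ i ∈ S, ‖euclRow H i‖ ≤ M * ε * J21 H := by
    have := Finset.sum_le_card_nsmul S _ _ fun i _ => row_norm_le hε G hcols hcoh H hGH i
    rwa [hcard, nsmul_eq_mul, ← mul_assoc] at this
  have hhalf : M * ε * J21 H < 1 / 2 * J21 H := mul_lt_mul_of_pos_right hMε hpos
  have hpt : ∀ i, ‖euclRow X₀ i‖ + ‖euclRow H i‖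
      - 2 * (if i ∈ S then ‖euclRow H i‖ else 0) ≤ ‖euclRow X i‖ := fun i => by
    rw [hrow i]
    split_ifs with h
    · have := norm_sub_le (euclRow X₀ i + euclRow H i) (euclRow H i)
      rw [add_sub_cancel_right] at this
      linarith
    · have hz : X₀ i = 0 := by simpa [hS] using h
      have : euclRow X₀ i = 0 := by simp [euclRow, hz]
      simp [this]
  have htot := Finset.sum_le_sum fun i (_ : i ∈ univ) => hpt i
  rw [Finset.sum_sub_distrib, Finset.sum_add_distrib, ← Finset.mul_sum, Finset.sum_ite_mem, Finset.univ_inter,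
    ← J21_eq_sum_norm, ← J21_eq_sum_norm, ← J21_eq_sum_norm] at htot
  linarith
end

section
/- Let 1 < p < ∞ with conjugate exponent q. Let X₀ ∈ ℂ^{K×ν} have row-support Λ, let B = G X₀, and assume the columns {g_j : j ∈ Λ} of G are linearly independent. If there exists a matrix H ∈ ℂ^{N×ν} such that G_Λ* H = sign_p((X₀)_Λ) (where (X₀)_Λ is the submatrix of the rows of X₀ indexed by Λ) and ‖H* g_j‖_{ℓq} < 1 for every j ∉ Λ, then X₀ is the unique minimizer of J_{p,1}(X) over {X ∈ ℂ^{K×ν} : GX = B}. -/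
/-!
Write `S j t = ∑ i, conj (H i t) * G i j` for the conjugate of the `(j, t)` entry of `G* H`. The
pairing `∑ j, ∑ t, S j t * X j t` equals `∑ i, ∑ t, conj (H i t) * (G X) i t`, so it depends on `X`
only through `G X` and takes the same value at every feasible point. At `X₀` this value is
`J_{p,1}(X₀)`, because `sign_p` is the dual (norming) vector of each nonzero row
(`sum_conj_signRow_mul`). At a feasible `X`, Hölder's inequality row by row, together with
`‖S j‖_q ≤ 1` (`signRow_Lq_le_one` on `Λ`, the assumption on `H` off `Λ`), bounds it by
`J_{p,1}(X)`. The bound is strict as soon as `X` has a nonzero row outside `Λ`, since there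
`‖S j‖_q < 1`. A feasible `X` with no such row equals `X₀` by linear independence of the columns
of `G` indexed by `Λ` (`eq_of_rows_supported`).
-/


open Finset

/-- The `J_{p,1}` norm of a matrix: sum of the ℓp norms of its rows. -/
noncomputable def Jp1 (p : ℝ) {K ν : ℕ} (X : Matrix (Fin K) (Fin ν) ℂ) : ℝ :=
  ∑ i, (∑ t, ‖X i t‖ ^ p) ^ (1 / p)

/-- The complex sign: `sign z = z/|z|` for `z ≠ 0` and `sign 0 = 0`. -/
noncomputable def csign (z : ℂ) : ℂ := if z = 0 then 0 else z / (‖z‖ : ℂ)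

/-- The `p`-sign of a row `r ∈ ℂ^ν` (with `q` the conjugate exponent of `p`):
entry `t` is `|r_t|^{p−1} sign(r_t) / ‖(|r_1|^{p−1},…,|r_ν|^{p−1})‖_{ℓq}` if `r ≠ 0`,
and `0` if `r = 0`. -/
noncomputable def signRow (p q : ℝ) {ν : ℕ} (r : Fin ν → ℂ) (t : Fin ν) : ℂ :=
  if r = 0 then 0
  else (((‖r t‖ ^ (p - 1)) / ((∑ s, (‖r s‖ ^ (p - 1)) ^ q) ^ (1 / q)) : ℝ) : ℂ) * csign (r t)

section Rows

variable {ν : ℕ} {p q : ℝ}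

lemma sum_rpow_pos {r : Fin ν → ℂ} (hr : r ≠ 0) : 0 < ∑ t, ‖r t‖ ^ p := by
  obtain ⟨t, ht⟩ := Function.ne_iff.mp hr
  exact Finset.sum_pos' (fun s _ => by positivity)
    ⟨t, Finset.mem_univ t, Real.rpow_pos_of_pos (norm_pos_iff.mpr ht) p⟩

/-- Since `(p - 1) q = p`, the normalizing sum in `signRow` is `∑ |r_t|^p`. -/
lemma sum_rpow_sub_one_rpow (h : p.HolderConjugate q) (r : Fin ν → ℂ) :
    ∑ s, (‖r s‖ ^ (p - 1)) ^ q = ∑ s, ‖r s‖ ^ p := by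
  refine Finset.sum_congr rfl fun s _ => ?_
  rw [← Real.rpow_mul (norm_nonneg _), h.sub_one_mul_conj]

lemma conj_csign_mul (z : ℂ) : (starRingEnd ℂ) (csign z) * z = (‖z‖ : ℂ) := by
  unfold csign
  split_ifs with hz
  · simp [hz]
  · have hz' : (‖z‖ : ℂ) ≠ 0 := by exact_mod_cast norm_ne_zero_iff.mpr hz
    rw [map_div₀, Complex.conj_ofReal, div_mul_eq_mul_div, Complex.conj_mul', div_eq_iff hz', sq]

lemma norm_csign_le (z : ℂ) : ‖csign z‖ ≤ 1 := by
  unfold csign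
  split_ifs with hz
  · simp
  · simp [hz]

/-- The `p`-sign of a row is norming: paired with the row it returns the `ℓp` norm. -/
lemma sum_conj_signRow_mul (h : p.HolderConjugate q) (r : Fin ν → ℂ) :
    ∑ t, (starRingEnd ℂ) (signRow p q r t) * r t
      = (((∑ t, ‖r t‖ ^ p) ^ (1 / p) : ℝ) : ℂ) := by
  by_cases hr : r = 0
  · have hp0 := h.ne_zero
    simp [hr, signRow, Real.zero_rpow hp0, Real.zero_rpow (inv_ne_zero hp0)]
  have hA := sum_rpow_pos (p := p) hr
  set A := ∑ t, ‖r t‖ ^ p with hAdef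
  have hterm : ∀ t, (starRingEnd ℂ) (signRow p q r t) * r t
      = ((‖r t‖ ^ p / A ^ (1 / q) : ℝ) : ℂ) := by
    intro t
    rw [signRow, if_neg hr, sum_rpow_sub_one_rpow h, map_mul, Complex.conj_ofReal, mul_assoc,
      conj_csign_mul, ← Complex.ofReal_mul, div_mul_eq_mul_div]
    congr 2
    rcases eq_or_ne (‖r t‖) 0 with h0 | h0
    · rw [h0, Real.zero_rpow h.ne_zero, mul_zero]
    · rw [Real.rpow_sub_one h0, div_mul_cancel₀ _ h0]
  rw [Finset.sum_congr rfl fun t _ => hterm t, ← Complex.ofReal_sum, ← Finset.sum_div, ← hAdef]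
  congr 1
  rw [div_eq_iff (Real.rpow_pos_of_pos hA _).ne', ← Real.rpow_add hA, one_div, one_div,
    h.inv_add_inv_eq_one, Real.rpow_one]

lemma signRow_Lq_le_one (h : p.HolderConjugate q) (r : Fin ν → ℂ) :
    (∑ t, ‖signRow p q r t‖ ^ q) ^ (1 / q) ≤ 1 := by
  have hq : 0 < q := h.symm.pos
  refine Real.rpow_le_one (Finset.sum_nonneg fun t _ => by positivity) ?_ (by positivity)
  by_cases hr : r = 0
  · simp [hr, signRow, Real.zero_rpow hq.ne']
  have hA := sum_rpow_pos (p := p) hr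
  have hD : ((∑ t, ‖r t‖ ^ p) ^ (1 / q)) ^ q = ∑ t, ‖r t‖ ^ p := by
    rw [← Real.rpow_mul hA.le, one_div_mul_cancel hq.ne', Real.rpow_one]
  calc ∑ t, ‖signRow p q r t‖ ^ q
      ≤ ∑ t, (‖r t‖ ^ (p - 1) / (∑ s, ‖r s‖ ^ p) ^ (1 / q)) ^ q := by
        refine Finset.sum_le_sum fun t _ => Real.rpow_le_rpow (norm_nonneg _) ?_ hq.le
        rw [signRow, if_neg hr, sum_rpow_sub_one_rpow h, norm_mul, Complex.norm_real,
          Real.norm_of_nonneg (by positivity)]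
        exact mul_le_of_le_one_right (by positivity) (norm_csign_le _)
    _ = (∑ t, (‖r t‖ ^ (p - 1)) ^ q) / (∑ s, ‖r s‖ ^ p) := by
        rw [Finset.sum_div]
        refine Finset.sum_congr rfl fun t _ => ?_
        rw [Real.div_rpow (by positivity) (by positivity), hD]
    _ = 1 := by rw [sum_rpow_sub_one_rpow h, div_self hA.ne']
    _ ≤ 1 := le_rfl

lemma norm_sum_mul_le_Lq_mul_Lp (h : p.HolderConjugate q) (u r : Fin ν → ℂ) :
    ‖∑ t, u t * r t‖ ≤ (∑ t, ‖u t‖ ^ q) ^ (1 / q) * (∑ t, ‖r t‖ ^ p) ^ (1 / p) := by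
  calc ‖∑ t, u t * r t‖ ≤ ∑ t, ‖u t‖ * ‖r t‖ :=
        (norm_sum_le _ _).trans_eq (Finset.sum_congr rfl fun t _ => norm_mul _ _)
    _ ≤ _ := Real.inner_le_Lp_mul_Lq_of_nonneg _ h.symm (fun _ _ => norm_nonneg _)
        (fun _ _ => norm_nonneg _)

end Rows

section Matrices

variable {N K ν : ℕ}

/-- The adjoint identity `⟨G* H, X⟩ = ⟨H, G X⟩` for the Frobenius pairing, in coordinates. -/
lemma dual_pairing (G : Matrix (Fin N) (Fin K) ℂ) (H : Matrix (Fin N) (Fin ν) ℂ)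
    (X : Matrix (Fin K) (Fin ν) ℂ) :
    ∑ j, ∑ t, (∑ i, (starRingEnd ℂ) (H i t) * G i j) * X j t
      = ∑ t, ∑ i, (starRingEnd ℂ) (H i t) * (G * X) i t := by
  rw [Finset.sum_comm]
  refine Finset.sum_congr rfl fun t _ => ?_
  simp only [Matrix.mul_apply, Finset.mul_sum, Finset.sum_mul]
  rw [Finset.sum_comm]
  simp only [mul_assoc]

lemma eq_of_rows_supported {G : Matrix (Fin N) (Fin K) ℂ} {Λ : Finset (Fin K)}
    (hind : LinearIndependent ℂ (fun j : ↥Λ => fun i => G i (j : Fin K)))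
    {X Y : Matrix (Fin K) (Fin ν) ℂ} (hX : ∀ j ∉ Λ, X j = 0) (hY : ∀ j ∉ Λ, Y j = 0)
    (hXY : G * X = G * Y) : X = Y := by
  ext j t
  by_cases hj : j ∈ Λ
  · refine sub_eq_zero.mp
      (Fintype.linearIndependent_iff.mp hind (fun j => X j t - Y j t) ?_ ⟨j, hj⟩)
    ext i
    have hit : (G * X) i t - (G * Y) i t = 0 := by rw [hXY, sub_self]
    rw [Matrix.mul_apply, Matrix.mul_apply, ← Finset.sum_sub_distrib] at hit
    rw [Finset.sum_apply, Pi.zero_apply, ← hit,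
      ← Finset.sum_subset (Finset.subset_univ Λ) fun k _ hk => by simp [hX k hk, hY k hk],
      ← Finset.sum_coe_sort Λ]
    refine Finset.sum_congr rfl fun k _ => ?_
    simp only [Pi.smul_apply, smul_eq_mul]
    ring
  · rw [hX j hj, hY j hj]

end Matrices

/-- Dual certificate condition for exact recovery by `J_{p,1}`
minimization (`1 < p < ∞`, `1/p + 1/q = 1`): if the columns of `G` indexed by the
row-support `Λ` of `X₀` are linearly independent and there exists `H ∈ ℂ^{N×ν}` with
`G_Λ* H = sign_p((X₀)_Λ)` and `‖H* g_j‖_{ℓq} < 1` for all `j ∉ Λ`, then `X₀` is the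
unique minimizer of `J_{p,1}` subject to `GX = G X₀`. -/
theorem dual_certificate_Jp1_unique_recovery
    (N K ν : ℕ) (hN : 0 < N) (hK : 0 < K) (hν : 0 < ν)
    (p q : ℝ) (hp : 1 < p) (hpq : 1 / p + 1 / q = 1)
    (G : Matrix (Fin N) (Fin K) ℂ)
    (X₀ : Matrix (Fin K) (Fin ν) ℂ)
    (Λ : Finset (Fin K))
    (hΛ : ∀ i : Fin K, X₀ i ≠ 0 ↔ i ∈ Λ)
    (hind : LinearIndependent ℂ (fun j : ↥Λ => fun i => G i (j : Fin K)))
    (B : Matrix (Fin N) (Fin ν) ℂ) (hB : B = G * X₀)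
    (H : Matrix (Fin N) (Fin ν) ℂ)
    (hH1 : ∀ j ∈ Λ, ∀ t : Fin ν,
      ∑ i, (starRingEnd ℂ) (G i j) * H i t = signRow p q (X₀ j) t)
    (hH2 : ∀ j ∉ Λ,
      (∑ t, ‖∑ i, (starRingEnd ℂ) (H i t) * G i j‖ ^ q) ^ (1 / q) < 1) :
    ∀ X : Matrix (Fin K) (Fin ν) ℂ, G * X = B → X ≠ X₀ → Jp1 p X₀ < Jp1 p X := by
  intro X hX hne
  have h : p.HolderConjugate q :=
    Real.holderConjugate_iff.mpr ⟨hp, by simpa only [one_div] using hpq⟩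
  set S : Fin K → Fin ν → ℂ := fun j t => ∑ i, (starRingEnd ℂ) (H i t) * G i j with hS
  have hSΛ : ∀ j ∈ Λ, ∀ t, S j t = (starRingEnd ℂ) (signRow p q (X₀ j) t) := by
    intro j hj t
    rw [← hH1 j hj t, map_sum]
    refine Finset.sum_congr rfl fun i _ => ?_
    rw [map_mul, Complex.conj_conj, mul_comm]
  have hX₀ : ∀ j ∉ Λ, X₀ j = 0 := fun j hj => not_not.mp (mt (hΛ j).mp hj)
  have hSle : ∀ j, (∑ t, ‖S j t‖ ^ q) ^ (1 / q) ≤ 1 := by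
    intro j
    by_cases hj : j ∈ Λ
    · simp only [hSΛ j hj, RCLike.norm_conj]
      exact signRow_Lq_le_one h _
    · exact (hH2 j hj).le
  have hrow : ∀ j, ∑ t, S j t * X₀ j t = (((∑ t, ‖X₀ j t‖ ^ p) ^ (1 / p) : ℝ) : ℂ) := by
    intro j
    by_cases hj : j ∈ Λ
    · simp only [hSΛ j hj]
      exact sum_conj_signRow_mul h _
    · have hp0 := h.ne_zero
      simp [hX₀ j hj, Real.zero_rpow hp0, Real.zero_rpow (inv_ne_zero hp0)]
  have hval : ∑ j, ∑ t, S j t * X j t = ((Jp1 p X₀ : ℝ) : ℂ) := by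
    rw [Jp1, Complex.ofReal_sum, ← Finset.sum_congr rfl fun j _ => hrow j]
    simp only [hS]
    rw [dual_pairing, dual_pairing, hX, hB]
  have hbound : Jp1 p X₀
      ≤ ∑ j, (∑ t, ‖S j t‖ ^ q) ^ (1 / q) * (∑ t, ‖X j t‖ ^ p) ^ (1 / p) := by
    calc Jp1 p X₀ ≤ ‖((Jp1 p X₀ : ℝ) : ℂ)‖ := by
          rw [Complex.norm_real]
          exact le_abs_self _
      _ ≤ ∑ j, ‖∑ t, S j t * X j t‖ := by
          rw [← hval]
          exact norm_sum_le _ _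
      _ ≤ _ := Finset.sum_le_sum fun j _ => norm_sum_mul_le_Lq_mul_Lp h _ _
  -- Otherwise `X` would be supported on `Λ` and hence equal to `X₀`.
  obtain ⟨j, hj, hXj⟩ : ∃ j, j ∉ Λ ∧ X j ≠ 0 := by
    by_contra! hcon
    exact hne (eq_of_rows_supported hind hcon hX₀ (hX.trans hB))
  refine hbound.trans_lt (Finset.sum_lt_sum (fun k _ => ?_) ⟨j, Finset.mem_univ j, ?_⟩)
  · exact mul_le_of_le_one_left
      (Real.rpow_nonneg (Finset.sum_nonneg fun t _ => by positivity) _) (hSle k)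
  · exact mul_lt_of_lt_one_left (Real.rpow_pos_of_pos (sum_rpow_pos hXj) _) (hH2 j hj)
end

section
/- Let Λ ⊆ {1,…,K} with |Λ| = M and Mε < 1 (so that G_Λ*G_Λ is invertible). Let 1 < p < ∞ with conjugate exponent q, and let S ∈ ℂ^{M×ν} be any matrix each of whose rows has ℓq-norm at most 1. Then the matrix H = G_Λ (G_Λ*G_Λ)^{−1} S satisfies G_Λ* H = S, and for every j ∉ Λ, ‖H* g_j‖_{ℓq} = ‖S* (G_Λ*G_Λ)^{−1} G_Λ* g_j‖_{ℓq} ≤ Mε/(1 − Mε); in particular, if Mε < 1/2 then ‖H* g_j‖_{ℓq} < 1 for all j ∉ Λ. -/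
open Finset

/-!
The Gram matrix `A = G_Λ* G_Λ` has unit diagonal and off-diagonal entries bounded by `ε`, so
the triangle inequality gives `(1 - Mε) ‖w‖₁ ≤ ‖A w‖₁` for every vector `w`
(`l1_lower_bound_of_coherence`). As `Mε < 1`, `A` is injective, hence invertible, and
`G_Λ* H = A A⁻¹ S = S`.

For `j ∉ Λ` put `w = A⁻¹ G_Λ* g_j`. The entries of `A w = G_Λ* g_j` are bounded by `ε`, so
`‖w‖₁ ≤ Mε / (1 - Mε)`. Since `A` is Hermitian, `H* g_j = S* w` is a combination of the
conjugated rows of `S` with coefficients `w`, and Minkowski's inequality in `ℓq`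
(`lq_combination_le`) bounds its norm by `‖w‖₁`.
-/

/-- A matrix with unit diagonal and off-diagonal entries at most `ε` is bounded below in `ℓ1`. -/
lemma l1_lower_bound_of_coherence {ι : Type*} [Fintype ι] (A : Matrix ι ι ℂ)
    {ε : ℝ} (hε : 0 ≤ ε) (hd : ∀ i, A i i = 1) (ho : ∀ i k, i ≠ k → ‖A i k‖ ≤ ε)
    (w : ι → ℂ) :
    (1 - (Fintype.card ι : ℝ) * ε) * ∑ i, ‖w i‖ ≤ ∑ i, ‖A.mulVec w i‖ := by
  classical
  have h : ∀ i, ‖w i‖ ≤ ‖A.mulVec w i‖ + ε * ∑ k, ‖w k‖ := by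
    intro i
    have h1 : w i = A.mulVec w i - ∑ k ∈ univ.erase i, A i k * w k := by
      have h2 : A.mulVec w i = ∑ k, A i k * w k := rfl
      rw [h2, ← Finset.add_sum_erase _ _ (mem_univ i), hd]
      ring
    have h3 : ‖∑ k ∈ univ.erase i, A i k * w k‖ ≤ ε * ∑ k, ‖w k‖ := by
      calc ‖∑ k ∈ univ.erase i, A i k * w k‖
          ≤ ∑ k ∈ univ.erase i, ε * ‖w k‖ := by
            refine norm_sum_le_of_le _ fun k hk => ?_
            rw [norm_mul]
            exact mul_le_mul_of_nonneg_right (ho i k (Finset.ne_of_mem_erase hk).symm)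
              (norm_nonneg _)
        _ ≤ ∑ k, ε * ‖w k‖ :=
            Finset.sum_le_sum_of_subset_of_nonneg (Finset.erase_subset _ _)
              fun _ _ _ => by positivity
        _ = ε * ∑ k, ‖w k‖ := by rw [Finset.mul_sum]
    calc ‖w i‖ = ‖A.mulVec w i - ∑ k ∈ univ.erase i, A i k * w k‖ := by rw [← h1]
      _ ≤ ‖A.mulVec w i‖ + ‖∑ k ∈ univ.erase i, A i k * w k‖ := norm_sub_le _ _
      _ ≤ _ := by gcongr
  have hs := Finset.sum_le_sum fun i (_ : i ∈ (univ : Finset ι)) => h i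
  rw [Finset.sum_add_distrib, Finset.sum_const, nsmul_eq_mul, Finset.card_univ] at hs
  linarith

lemma isUnit_of_coherence {ι : Type*} [Fintype ι] [DecidableEq ι] (A : Matrix ι ι ℂ)
    {ε : ℝ} (hε : 0 ≤ ε) (hd : ∀ i, A i i = 1) (ho : ∀ i k, i ≠ k → ‖A i k‖ ≤ ε)
    (hc : (Fintype.card ι : ℝ) * ε < 1) : IsUnit A := by
  rw [← Matrix.mulVec_injective_iff_isUnit]
  refine (injective_iff_map_eq_zero A.mulVecLin).2 fun w hw => ?_
  have hw' : A.mulVec w = 0 := hw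
  have h := l1_lower_bound_of_coherence A hε hd ho w
  simp only [hw', Pi.zero_apply, norm_zero, Finset.sum_const_zero] at h
  have h0 : ∑ i, ‖w i‖ = 0 :=
    le_antisymm (nonpos_of_mul_nonpos_right h (by linarith))
      (Finset.sum_nonneg fun _ _ => norm_nonneg _)
  rw [Finset.sum_eq_zero_iff_of_nonneg fun _ _ => norm_nonneg _] at h0
  ext i
  simpa using h0 i (mem_univ i)

/-- Minkowski's inequality for a linear combination of vectors in the unit ball of `ℓq`. -/
lemma lq_combination_le {ι τ : Type*} [Fintype ι] [Fintype τ] {q : ℝ} (hq : 1 ≤ q)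
    (T : ι → τ → ℂ) (hT : ∀ i, (∑ t, ‖T i t‖ ^ q) ^ (1 / q) ≤ 1) (w : ι → ℂ) :
    (∑ t, ‖∑ i, w i * T i t‖ ^ q) ^ (1 / q) ≤ ∑ i, ‖w i‖ := by
  have hq0 : 0 < q := by linarith
  have hr : (ENNReal.ofReal q).toReal = q := ENNReal.toReal_ofReal hq0.le
  haveI : Fact (1 ≤ ENNReal.ofReal q) := ⟨by simpa using ENNReal.ofReal_le_ofReal hq⟩
  have hn : ∀ f : PiLp (ENNReal.ofReal q) fun _ : τ => ℂ,
      ‖f‖ = (∑ t, ‖f t‖ ^ q) ^ (1 / q) := by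
    intro f
    rw [PiLp.norm_eq_sum (by rw [hr]; exact hq0), hr]
  let v : ι → PiLp (ENNReal.ofReal q) fun _ : τ => ℂ := fun i => WithLp.toLp _ (T i)
  have hv : (∑ t, ‖∑ i, w i * T i t‖ ^ q) ^ (1 / q) = ‖∑ i, w i • v i‖ := by
    rw [hn]
    simp [v]
  rw [hv]
  refine norm_sum_le_of_le _ fun i _ => ?_
  rw [norm_smul]
  refine mul_le_of_le_one_right (norm_nonneg _) ?_
  rw [hn]
  exact hT i

/-- Coherence-based construction of a dual certificate: with `|Λ| = M`,
`Mε < 1`, `1 < p < ∞`, `1/p + 1/q = 1`, and `S` a matrix whose rows have ℓq-norm at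
most 1, the matrix `H = G_Λ (G_Λ*G_Λ)⁻¹ S` satisfies `G_Λ* H = S`, and for every
`j ∉ Λ`, `‖H* g_j‖_{ℓq} = ‖S* (G_Λ*G_Λ)⁻¹ G_Λ* g_j‖_{ℓq} ≤ Mε/(1 − Mε)`; in
particular if `Mε < 1/2` then `‖H* g_j‖_{ℓq} < 1` for all `j ∉ Λ`. -/
theorem dual_certificate_construction_coherence
    (N K ν : ℕ) (hN : 0 < N) (hK : 0 < K) (hν : 0 < ν) (ε : ℝ) (hε : 0 < ε)
    (G : Matrix (Fin N) (Fin K) ℂ)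
    (hcols : ∀ j : Fin K, Real.sqrt (∑ i, ‖G i j‖ ^ 2) = 1)
    (hcoh : ∀ i j : Fin K, i ≠ j →
      ‖∑ n, (starRingEnd ℂ) (G n i) * G n j‖ < ε)
    (Λ : Finset (Fin K)) (M : ℕ) (hcard : Λ.card = M) (hM : (M : ℝ) * ε < 1)
    (p q : ℝ) (hp : 1 < p) (hpq : 1 / p + 1 / q = 1)
    (S : Matrix ↥Λ (Fin ν) ℂ)
    (hS : ∀ i : ↥Λ, (∑ t, ‖S i t‖ ^ q) ^ (1 / q) ≤ 1)
    (GΛ : Matrix (Fin N) ↥Λ ℂ)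
    (hGΛ : GΛ = Matrix.of fun (i : Fin N) (j : ↥Λ) => G i (j : Fin K))
    (H : Matrix (Fin N) (Fin ν) ℂ)
    (hH : H = GΛ * ((GΛ.conjTranspose * GΛ)⁻¹ * S)) :
    GΛ.conjTranspose * H = S ∧
    (∀ j ∉ Λ,
      (∑ t, ‖∑ i, (starRingEnd ℂ) (H i t) * G i j‖ ^ q) ^ (1 / q) =
        (∑ t, ‖(S.conjTranspose * ((GΛ.conjTranspose * GΛ)⁻¹ * GΛ.conjTranspose)).mulVec
          (fun n => G n j) t‖ ^ q) ^ (1 / q) ∧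
      (∑ t, ‖∑ i, (starRingEnd ℂ) (H i t) * G i j‖ ^ q) ^ (1 / q) ≤
        (M : ℝ) * ε / (1 - (M : ℝ) * ε)) ∧
    ((M : ℝ) * ε < 1 / 2 → ∀ j ∉ Λ,
      (∑ t, ‖∑ i, (starRingEnd ℂ) (H i t) * G i j‖ ^ q) ^ (1 / q) < 1) := by
  have hq : 1 ≤ q := by
    have hp' : 1 / p < 1 := by rw [div_lt_one (by linarith)]; exact hp
    have hp0 : 0 < 1 / p := by positivity
    have hq1 : 0 < 1 / q := by linarith
    have hq0 : 0 < q := one_div_pos.1 hq1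
    have : 1 / q ≤ 1 := by linarith
    rwa [div_le_one hq0] at this
  set A := GΛ.conjTranspose * GΛ with hA
  have hent : ∀ i k : ↥Λ, A i k = ∑ n, (starRingEnd ℂ) (G n i) * G n k := by
    intro i k
    simp [hA, hGΛ, Matrix.mul_apply]
  have hd : ∀ i, A i i = 1 := by
    intro i
    have h1 : ∑ n, ‖G n i‖ ^ 2 = 1 := Real.sqrt_eq_one.1 (hcols i)
    rw [hent]
    simp only [Complex.conj_mul']
    exact_mod_cast h1
  have ho : ∀ i k : ↥Λ, i ≠ k → ‖A i k‖ ≤ ε := by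
    intro i k hik
    rw [hent]
    exact (hcoh i k fun h => hik (Subtype.ext h)).le
  have hc : Fintype.card ↥Λ = M := by rw [Fintype.card_coe, hcard]
  have hU : IsUnit A := isUnit_of_coherence A hε.le hd ho (by rw [hc]; exact hM)
  have hdet : IsUnit A.det := (Matrix.isUnit_iff_isUnit_det A).1 hU
  have hAH : A.conjTranspose = A := by simp [hA]
  have hHH : H.conjTranspose = S.conjTranspose * (A⁻¹ * GΛ.conjTranspose) := by
    rw [hH, Matrix.conjTranspose_mul, Matrix.conjTranspose_mul,
      Matrix.conjTranspose_nonsing_inv, hAH, Matrix.mul_assoc]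
  have hval : ∀ j t, ∑ i, (starRingEnd ℂ) (H i t) * G i j =
      (S.conjTranspose * (A⁻¹ * GΛ.conjTranspose)).mulVec (fun n => G n j) t := by
    intro j t
    rw [← hHH]
    rfl
  have hbound : ∀ j ∉ Λ, (∑ t, ‖∑ i, (starRingEnd ℂ) (H i t) * G i j‖ ^ q) ^ (1 / q) ≤
      (M : ℝ) * ε / (1 - (M : ℝ) * ε) := by
    intro j hj
    set b := GΛ.conjTranspose.mulVec (fun n => G n j) with hb
    set w := A⁻¹.mulVec b with hw
    have hAw : A.mulVec w = b := by
      rw [hw, Matrix.mulVec_mulVec, Matrix.mul_nonsing_inv _ hdet, Matrix.one_mulVec]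
    have hbe : ∀ i, ‖b i‖ ≤ ε := by
      intro i
      have : b i = ∑ n, (starRingEnd ℂ) (G n i) * G n j := by
        simp [hb, hGΛ, Matrix.mulVec, dotProduct]
      rw [this]
      exact (hcoh i j fun h => hj (h ▸ i.2)).le
    have hb1 : ∑ i, ‖b i‖ ≤ M * ε := by
      calc ∑ i, ‖b i‖ ≤ ∑ _i : ↥Λ, ε := Finset.sum_le_sum fun i _ => hbe i
        _ = M * ε := by rw [Finset.sum_const, nsmul_eq_mul, Finset.card_univ, hc]
    have hw1 := l1_lower_bound_of_coherence A hε.le hd ho w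
    rw [hAw, hc] at hw1
    have hw2 : ∑ i, ‖w i‖ ≤ M * ε / (1 - M * ε) := by
      rw [le_div_iff₀ (by linarith)]
      linarith
    have hval' : ∀ t, ∑ i, (starRingEnd ℂ) (H i t) * G i j =
        ∑ i, w i * (starRingEnd ℂ) (S i t) := by
      intro t
      rw [hval, ← Matrix.mulVec_mulVec, ← Matrix.mulVec_mulVec]
      change ∑ i, (starRingEnd ℂ) (S i t) * w i = _
      exact Finset.sum_congr rfl fun i _ => mul_comm _ _
    simp only [hval']
    refine (lq_combination_le hq (fun i t => (starRingEnd ℂ) (S i t)) ?_ w).trans hw2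
    intro i
    simpa only [RCLike.norm_conj] using hS i
  refine ⟨?_, fun j hj => ⟨?_, hbound j hj⟩, fun hM2 j hj => (hbound j hj).trans_lt ?_⟩
  · rw [hH, ← Matrix.mul_assoc, ← hA, Matrix.mul_nonsing_inv_cancel_left _ _ hdet]
  · simp only [hval]
  · rw [div_lt_one (by linarith)]
    linarith
end

section
/- Let Λ ⊆ {1,…,K} with |Λ| = M and (M−1)ε < 1. Then the columns {g_j : j ∈ Λ} are linearly independent, the Gram matrix G_Λ*G_Λ is invertible, and its inverse satisfies ‖(G_Λ*G_Λ)^{−1}‖_{1→1} ≤ 1/(1 − (M−1)ε), where ‖A‖_{1→1} = sup_{v≠0} ‖Av‖_{ℓ1}/‖v‖_{ℓ1} is the induced ℓ1 operator norm. -/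
/-!
The Gram matrix `A = G_Λ* G_Λ` has unit diagonal and off-diagonal entries of modulus less than `ε`.
Comparing `v` with `A v` coordinatewise gives `‖v i‖ ≤ ‖(A v) i‖ + ε (‖v‖₁ - ‖v i‖)`, and summing
over `i` yields `(1 - (M - 1) ε) ‖v‖₁ ≤ ‖A v‖₁` (`l1_lower_bound`). As `1 - (M - 1) ε > 0`, this
makes `v ↦ A v` injective, hence also `v ↦ G_Λ v`; applied to `A⁻¹ v` it bounds the inverse.
-/

open Finset

/-- A square matrix with unit diagonal and off-diagonal entries of modulus at most `ε` is bounded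
below in the `ℓ¹` norm. -/
lemma l1_lower_bound {ι : Type*} [Fintype ι] [DecidableEq ι] (A : Matrix ι ι ℂ) (ε : ℝ)
    (hdiag : ∀ i, A i i = 1) (hoff : ∀ i j, i ≠ j → ‖A i j‖ ≤ ε) (v : ι → ℂ) :
    (1 - ((Fintype.card ι : ℝ) - 1) * ε) * ∑ i, ‖v i‖ ≤ ∑ i, ‖A.mulVec v i‖ := by
  have key : ∀ i, ‖v i‖ ≤ ‖A.mulVec v i‖ + ε * ((∑ j, ‖v j‖) - ‖v i‖) := by
    intro i
    have h1 : A.mulVec v i = v i + ∑ j ∈ Finset.univ.erase i, A i j * v j := by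
      rw [Matrix.mulVec, dotProduct, ← Finset.add_sum_erase _ _ (Finset.mem_univ i), hdiag, one_mul]
    have h2 : ‖∑ j ∈ Finset.univ.erase i, A i j * v j‖ ≤ ε * ((∑ j, ‖v j‖) - ‖v i‖) := by
      rw [← Finset.add_sum_erase _ _ (Finset.mem_univ i), add_sub_cancel_left, Finset.mul_sum]
      refine (norm_sum_le _ _).trans (Finset.sum_le_sum fun j hj => ?_)
      rw [norm_mul]
      exact mul_le_mul_of_nonneg_right (hoff i j (Finset.ne_of_mem_erase hj).symm) (norm_nonneg _)
    have h3 : v i = A.mulVec v i - ∑ j ∈ Finset.univ.erase i, A i j * v j := by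
      rw [h1]; ring
    calc ‖v i‖ ≤ ‖A.mulVec v i‖ + ‖∑ j ∈ Finset.univ.erase i, A i j * v j‖ := by
          conv_lhs => rw [h3]
          exact norm_sub_le _ _
      _ ≤ _ := by gcongr
  have hsum := Finset.sum_le_sum fun i (_ : i ∈ Finset.univ) => key i
  rw [Finset.sum_add_distrib, ← Finset.mul_sum, Finset.sum_sub_distrib, Finset.sum_const,
    Finset.card_univ, nsmul_eq_mul] at hsum
  linarith

/-- With `|Λ| = M` and `(M−1)ε < 1`, the columns `{g_j : j ∈ Λ}` are
linearly independent, the Gram matrix `G_Λ*G_Λ` is invertible, and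
`‖(G_Λ*G_Λ)⁻¹‖_{1→1} ≤ 1/(1 − (M−1)ε)`, where
`‖A‖_{1→1} = sup_{v≠0} ‖Av‖₁/‖v‖₁`. -/
theorem gram_invertible_and_inverse_l1_bound
    (N K : ℕ) (hN : 0 < N) (hK : 0 < K) (ε : ℝ) (hε : 0 < ε)
    (G : Matrix (Fin N) (Fin K) ℂ)
    (hcols : ∀ j : Fin K, Real.sqrt (∑ i, ‖G i j‖ ^ 2) = 1)
    (hcoh : ∀ i j : Fin K, i ≠ j →
      ‖∑ n, (starRingEnd ℂ) (G n i) * G n j‖ < ε)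
    (Λ : Finset (Fin K)) (M : ℕ) (hcard : Λ.card = M)
    (hM : ((M : ℝ) - 1) * ε < 1)
    (GΛ : Matrix (Fin N) ↥Λ ℂ)
    (hGΛ : GΛ = Matrix.of fun (i : Fin N) (j : ↥Λ) => G i (j : Fin K)) :
    LinearIndependent ℂ (fun j : ↥Λ => fun i => G i (j : Fin K)) ∧
    IsUnit (GΛ.conjTranspose * GΛ) ∧
    (⨆ v : {v : ↥Λ → ℂ // v ≠ 0},
        (∑ i, ‖((GΛ.conjTranspose * GΛ)⁻¹).mulVec v.1 i‖) / (∑ i, ‖v.1 i‖)) ≤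
      1 / (1 - ((M : ℝ) - 1) * ε) := by
  have hcard' : (Fintype.card ↥Λ : ℝ) = M := by rw [Fintype.card_coe, hcard]
  have hpos : 0 < 1 - ((M : ℝ) - 1) * ε := by linarith
  have hdiag : ∀ i, (GΛ.conjTranspose * GΛ) i i = 1 := by
    intro i
    have h := Real.sqrt_eq_one.mp (hcols i)
    rw [Matrix.mul_apply, hGΛ]
    simp only [Matrix.conjTranspose_apply, Matrix.of_apply, RCLike.star_def, Complex.conj_mul']
    exact_mod_cast h
  have hoff : ∀ i j, i ≠ j → ‖(GΛ.conjTranspose * GΛ) i j‖ ≤ ε := by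
    intro i j hij
    have h := hcoh i j (fun h => hij (Subtype.ext h))
    rw [Matrix.mul_apply, hGΛ]
    exact h.le
  have hlow := l1_lower_bound _ ε hdiag hoff
  rw [hcard'] at hlow
  have hker : ∀ v, (GΛ.conjTranspose * GΛ).mulVec v = 0 → v = 0 := by
    intro v hv
    have h := hlow v
    simp only [hv, Pi.zero_apply, norm_zero, Finset.sum_const_zero] at h
    have h0 : ∑ i, ‖v i‖ = 0 :=
      le_antisymm (nonpos_of_mul_nonpos_right h hpos)
        (Finset.sum_nonneg fun _ _ => norm_nonneg _)
    funext i
    exact norm_eq_zero.mp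
      ((Finset.sum_eq_zero_iff_of_nonneg fun _ _ => norm_nonneg _).mp h0 i (Finset.mem_univ i))
  have hunit : IsUnit (GΛ.conjTranspose * GΛ) := by
    rw [← Matrix.mulVec_injective_iff_isUnit]
    intro v w hvw
    exact sub_eq_zero.mp (hker _ (by rw [Matrix.mulVec_sub]; exact sub_eq_zero.mpr hvw))
  refine ⟨?_, hunit, ?_⟩
  · have hinj : Function.Injective GΛ.mulVec := by
      intro v w hvw
      refine Matrix.mulVec_injective_iff_isUnit.mpr hunit ?_
      simp only [← Matrix.mulVec_mulVec, hvw]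
    have h := Matrix.mulVec_injective_iff.mp hinj
    rw [hGΛ] at h
    exact h
  · -- `Real.iSup_le` also covers the empty supremum (`Λ = ∅`), whose value is `0`.
    refine Real.iSup_le (fun v => ?_) (one_div_pos.mpr hpos).le
    have h := hlow ((GΛ.conjTranspose * GΛ)⁻¹.mulVec v.1)
    rw [Matrix.mulVec_mulVec, Matrix.mul_nonsing_inv _ ((Matrix.isUnit_iff_isUnit_det _).mp hunit),
      Matrix.one_mulVec] at h
    refine div_le_of_le_mul₀ (Finset.sum_nonneg fun _ _ => norm_nonneg _)
      (one_div_pos.mpr hpos).le ?_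
    rw [one_div, ← div_eq_inv_mul, le_div_iff₀ hpos]
    linarith
end

section
/- Let Λ ⊆ {1,…,K} with |Λ| = M and (M−1)ε < 1. Then for every vector v supported on Λ, ‖Gv‖_{ℓ2}² ≥ (1 − (M−1)ε)‖v‖_{ℓ2}²; consequently, for every matrix X ∈ ℂ^{K×ν} with rowsupp(X) ⊆ Λ, ‖X‖_F ≤ ‖GX‖_F / sqrt(1 − (M−1)ε). -/
/-!
Expanding `‖Gv‖²` as the quadratic form of the Gram matrix `GᴴG` leaves `‖v‖²` on the diagonal,
while coherence bounds each off-diagonal term below by `-ε |v i| |v j|`. Hence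
`‖Gv‖² ≥ (1 + ε) ‖v‖² - ε (∑ |v i|)²`, and Cauchy–Schwarz on the support, `(∑ |v i|)² ≤ M ‖v‖²`,
gives the vector bound. The Frobenius bound is its sum over the columns of `X`.
-/

open Finset

/-- The Frobenius norm of a complex matrix. -/
noncomputable def frob {α β : Type*} [Fintype α] [Fintype β]
    (X : Matrix α β ℂ) : ℝ :=
  Real.sqrt (∑ i, ∑ t, ‖X i t‖ ^ 2)

lemma sum_norm_sq_mulVec {m n : Type*} [Fintype m] [Fintype n] (G : Matrix m n ℂ) (v : n → ℂ) :
    ∑ k, ‖G.mulVec v k‖ ^ 2 =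
      ∑ i, ∑ j, ((starRingEnd ℂ) (v i) * v j * ∑ k, (starRingEnd ℂ) (G k i) * G k j).re := by
  have h : ((∑ k, ‖G.mulVec v k‖ ^ 2 : ℝ) : ℂ) =
      ∑ i, ∑ j, ((starRingEnd ℂ) (v i) * v j * ∑ k, (starRingEnd ℂ) (G k i) * G k j) := by
    push_cast
    simp_rw [← Complex.conj_mul', Matrix.mulVec, dotProduct, map_sum, Finset.sum_mul_sum,
      Finset.mul_sum]
    rw [Finset.sum_comm]
    refine Finset.sum_congr rfl fun i _ => ?_
    rw [Finset.sum_comm]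
    refine Finset.sum_congr rfl fun j _ => Finset.sum_congr rfl fun k _ => ?_
    rw [map_mul]
    ring
  have h' := congrArg Complex.re h
  simpa only [Complex.ofReal_re, Complex.re_sum] using h'

/-- The coherence lower bound before the support of `v` is used. -/
lemma gram_lower_bound {m n : Type*} [Fintype m] [Fintype n] (G : Matrix m n ℂ) (ε : ℝ)
    (hcols : ∀ j, Real.sqrt (∑ i, ‖G i j‖ ^ 2) = 1)
    (hcoh : ∀ i j, i ≠ j → ‖∑ k, (starRingEnd ℂ) (G k i) * G k j‖ < ε) (v : n → ℂ) :
    (1 + ε) * ∑ j, ‖v j‖ ^ 2 - ε * (∑ j, ‖v j‖) ^ 2 ≤ ∑ k, ‖G.mulVec v k‖ ^ 2 := by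
  classical
  rw [sum_norm_sq_mulVec]
  have hsplit : (1 + ε) * ∑ j, ‖v j‖ ^ 2 - ε * (∑ j, ‖v j‖) ^ 2 =
      ∑ i, ∑ j, ((if i = j then (1 + ε) * ‖v i‖ ^ 2 else 0) - ε * (‖v i‖ * ‖v j‖)) := by
    rw [sq (∑ j, ‖v j‖), Finset.sum_mul_sum]
    simp [Finset.sum_sub_distrib, Finset.mul_sum]
  rw [hsplit]
  refine Finset.sum_le_sum fun i _ => Finset.sum_le_sum fun j _ => ?_
  by_cases hij : i = j
  · subst hij
    have hg : ∑ k, (starRingEnd ℂ) (G k i) * G k i = 1 := by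
      simp_rw [Complex.conj_mul']
      exact_mod_cast Real.sqrt_eq_one.mp (hcols i)
    have hre : ((starRingEnd ℂ) (v i) * v i).re = ‖v i‖ ^ 2 := by
      rw [Complex.conj_mul', ← Complex.ofReal_pow, Complex.ofReal_re]
    rw [hg, mul_one, hre, if_pos rfl]
    exact le_of_eq (by ring)
  · rw [if_neg hij, zero_sub]
    set g := ∑ k, (starRingEnd ℂ) (G k i) * G k j with hgdef
    have h1 := neg_le_of_abs_le (Complex.abs_re_le_norm ((starRingEnd ℂ) (v i) * v j * g))
    have h2 : ‖(starRingEnd ℂ) (v i) * v j * g‖ ≤ ε * (‖v i‖ * ‖v j‖) := by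
      rw [norm_mul, norm_mul, RCLike.norm_conj, mul_comm]
      exact mul_le_mul_of_nonneg_right (hcoh i j hij).le (by positivity)
    linarith

/-- With `|Λ| = M` and `(M−1)ε < 1`: every vector `v` supported on
`Λ` satisfies `‖Gv‖₂² ≥ (1 − (M−1)ε)‖v‖₂²`, and consequently every matrix `X` with
row-support inside `Λ` satisfies `‖X‖_F ≤ ‖GX‖_F / √(1 − (M−1)ε)`. -/
theorem restricted_lower_singular_bound
    (N K ν : ℕ) (hN : 0 < N) (hK : 0 < K) (hν : 0 < ν) (ε : ℝ) (hε : 0 < ε)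
    (G : Matrix (Fin N) (Fin K) ℂ)
    (hcols : ∀ j : Fin K, Real.sqrt (∑ i, ‖G i j‖ ^ 2) = 1)
    (hcoh : ∀ i j : Fin K, i ≠ j →
      ‖∑ n, (starRingEnd ℂ) (G n i) * G n j‖ < ε)
    (Λ : Finset (Fin K)) (M : ℕ) (hcard : Λ.card = M)
    (hM : ((M : ℝ) - 1) * ε < 1) :
    (∀ v : Fin K → ℂ, (∀ j ∉ Λ, v j = 0) →
      (∑ i, ‖G.mulVec v i‖ ^ 2) ≥ (1 - ((M : ℝ) - 1) * ε) * ∑ j, ‖v j‖ ^ 2) ∧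
    (∀ X : Matrix (Fin K) (Fin ν) ℂ, (∀ i ∉ Λ, X i = 0) →
      frob X ≤ frob (G * X) / Real.sqrt (1 - ((M : ℝ) - 1) * ε)) := by
  have hvec : ∀ v : Fin K → ℂ, (∀ j ∉ Λ, v j = 0) →
      (1 - ((M : ℝ) - 1) * ε) * ∑ j, ‖v j‖ ^ 2 ≤ ∑ i, ‖G.mulVec v i‖ ^ 2 := by
    intro v hv
    have hgram := gram_lower_bound G ε hcols hcoh v
    have hcs : (∑ j, ‖v j‖) ^ 2 ≤ (M : ℝ) * ∑ j, ‖v j‖ ^ 2 := by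
      have h1 : ∑ j ∈ Λ, ‖v j‖ = ∑ j, ‖v j‖ :=
        Finset.sum_subset (Finset.subset_univ _) fun j _ hj => by simp [hv j hj]
      have h2 : ∑ j ∈ Λ, ‖v j‖ ^ 2 = ∑ j, ‖v j‖ ^ 2 :=
        Finset.sum_subset (Finset.subset_univ _) fun j _ hj => by simp [hv j hj]
      rw [← h1, ← h2, ← hcard]
      exact sq_sum_le_card_mul_sum_sq
    have := mul_le_mul_of_nonneg_left hcs hε.le
    linarith
  refine ⟨hvec, fun X hX => ?_⟩
  have hpos : 0 < 1 - ((M : ℝ) - 1) * ε := by linarith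
  rw [le_div_iff₀ (Real.sqrt_pos.mpr hpos), frob, frob,
    ← Real.sqrt_mul (Finset.sum_nonneg fun i _ => Finset.sum_nonneg fun t _ => by positivity)]
  apply Real.sqrt_le_sqrt
  rw [Finset.sum_comm, Finset.sum_comm (f := fun i t => ‖(G * X) i t‖ ^ 2), mul_comm,
    Finset.mul_sum]
  exact Finset.sum_le_sum fun t _ => hvec (fun j => X j t) fun j hj => by simp [hX j hj]
end
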